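/- For every index h that is the right endpoint of a block of Π(L), the blocks of Π(L) contained in the prefix (l_1, …, l_h) form a valid partition of that prefix whose number of blocks is the maximum possible over all valid partitions of (l_1, …, l_h), and whose last-block total equals y_h. -/

import Mathlib

/-- `pSum L i` is `x_i`: the sum of the first `i` elements of `L` (so `pSum L 0 = 0`). -/
def pSum (L : List ℝ) (i : ℕ) : ℝ := (L.take i).sum

/-- A valid partition of `L`: a partition of `L` into nonempty consecutive blocks
whose totals are non-decreasing from left to right. -/
def ValidPartition (L : List ℝ) (P : List (List ℝ)) : Prop :=
  P.flatten = L ∧ (∀ B ∈ P, B ≠ []) ∧ List.Chain' (· ≤ ·) (P.map List.sum)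

/-- The total of the last block of a partition (`0` for the empty partition). -/
def lastTotal (P : List (List ℝ)) : ℝ := (P.map List.sum).getLastD 0

/-- `wrapLen L` is the wrapping length `y_{|L|}`: the minimum, over all valid
partitions of `L`, of the total of the last block (with `wrapLen [] = 0`,
realized by the empty partition). -/
noncomputable def wrapLen (L : List ℝ) : ℝ :=
  sInf {t | ∃ P, ValidPartition L P ∧ lastTotal P = t}

open Classical in
/-- The recursively defined partition `Π(L)`: for a nonempty `L` of length `i`,
let `h` be the largest index `0 ≤ h < i` with `x_h + y_h ≤ x_i`, take
`(l_{h+1}, …, l_i)` as the last block, and recurse on `(l_1, …, l_h)`. -/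
noncomputable def piPart (L : List ℝ) : List (List ℝ) :=
  if L.length = 0 then []
  else
    let h := Nat.findGreatest
      (fun h => pSum L h + wrapLen (L.take h) ≤ pSum L L.length) (L.length - 1)
    piPart (L.take h) ++ [L.drop h]
termination_by L.length
decreasing_by
  have hle : Nat.findGreatest
      (fun h => pSum L h + wrapLen (L.take h) ≤ pSum L L.length) (L.length - 1)
      ≤ L.length - 1 := Nat.findGreatest_le _
  simp only [List.length_take]
  omega

open Classical in
noncomputable def hIdx (L : List ℝ) : ℕ := Nat.findGreatest
      (fun h => pSum L h + wrapLen (L.take h) ≤ pSum L L.length) (L.length - 1)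

theorem piPart_nil : piPart [] = [] := by
  rw [piPart]; simp

theorem piPart_ne (L : List ℝ) (h : L ≠ []) :
    piPart L = piPart (L.take (hIdx L)) ++ [L.drop (hIdx L)] := by
  conv_lhs => rw [piPart]
  have : L.length ≠ 0 := by simpa using h
  rw [if_neg this]
  rfl

theorem hIdx_lt (L : List ℝ) (h : L ≠ []) : hIdx L < L.length := by
  have h1 : hIdx L ≤ L.length - 1 := Nat.findGreatest_le _
  have : L.length ≠ 0 := by simpa using h
  omega

theorem valid_nil : ValidPartition [] [] := by
  refine ⟨rfl, by simp, ?_⟩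
  show List.IsChain _ _
  simp

theorem valid_nil_eq (P : List (List ℝ)) (h : ValidPartition [] P) : P = [] := by
  obtain ⟨h1, h2, -⟩ := h
  rcases P with _ | ⟨B, P⟩
  · rfl
  · exfalso
    simp at h1 h2
    exact h2.1 h1.1

theorem wrapLen_nil : wrapLen [] = 0 := by
  have : {t | ∃ P, ValidPartition [] P ∧ lastTotal P = t} = {0} := by
    ext t
    constructor
    · rintro ⟨P, hP, rfl⟩
      rw [valid_nil_eq P hP]; simp [lastTotal]
    · rintro rfl
      exact ⟨[], valid_nil, by simp [lastTotal]⟩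
  rw [wrapLen, this, csInf_singleton]

theorem wrapLen_eq (L : List ℝ) (P : List (List ℝ)) (hP : ValidPartition L P)
    (hm : ∀ P', ValidPartition L P' → lastTotal P ≤ lastTotal P') :
    wrapLen L = lastTotal P := by
  apply IsLeast.csInf_eq
  refine ⟨⟨P, hP, rfl⟩, ?_⟩
  rintro t ⟨P', h, rfl⟩
  exact hm P' h

theorem lastTotal_snoc (Q : List (List ℝ)) (B : List ℝ) : lastTotal (Q ++ [B]) = B.sum := by
  simp [lastTotal]

theorem valid_snoc (A B : List ℝ) (Q : List (List ℝ)) (hQ : ValidPartition A Q)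
    (hB : B ≠ []) (h : lastTotal Q ≤ B.sum) : ValidPartition (A ++ B) (Q ++ [B]) := by
  obtain ⟨h1, h2, h3⟩ := hQ
  refine ⟨by simp [h1], ?_, ?_⟩
  · intro C hC
    rcases List.mem_append.1 hC with hC | hC
    · exact h2 C hC
    · simp at hC; subst hC; exact hB
  · change List.IsChain _ _ at h3
    show List.IsChain _ _
    rw [List.map_append, List.isChain_append]
    refine ⟨h3, by simp, ?_⟩
    intro x hx y hy
    simp only [List.map_cons, List.map_nil, List.head?_cons, Option.mem_def, Option.some.injEq] at hy
    subst hy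
    have : lastTotal Q = x := by
      rw [lastTotal, List.getLastD_eq_getLast?, Option.mem_def.1 hx]; rfl
    rw [← this]; exact h

theorem valid_snoc_inv (L B : List ℝ) (Q : List (List ℝ)) (hQ : ValidPartition L (Q ++ [B]))
    (hL : ∀ l ∈ L, 0 < l) :
    L = Q.flatten ++ B ∧ ValidPartition Q.flatten Q ∧ B ≠ [] ∧ lastTotal Q ≤ B.sum := by
  obtain ⟨h1, h2, h3⟩ := hQ
  have e : L = Q.flatten ++ B := by rw [← h1]; simp
  change List.IsChain _ _ at h3
  rw [List.map_append, List.isChain_append] at h3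
  refine ⟨e, ⟨rfl, fun C hC => h2 C (by simp [hC]), h3.1⟩, h2 B (by simp), ?_⟩
  rcases hh : (Q.map List.sum).getLast? with _ | x
  · rw [lastTotal, List.getLastD_eq_getLast?, hh]
    exact List.sum_nonneg fun l hl => (hL l (by rw [e]; simp [hl])).le
  · have := h3.2.2 x hh B.sum (by simp)
    rw [lastTotal, List.getLastD_eq_getLast?, hh]
    exact this

theorem hIdx_spec (L : List ℝ) (hL : ∀ l ∈ L, 0 < l) :
    pSum L (hIdx L) + wrapLen (L.take (hIdx L)) ≤ pSum L L.length := by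
  classical
  have := Nat.findGreatest_spec (P := fun h => pSum L h + wrapLen (L.take h) ≤ pSum L L.length)
    (m := 0) (n := L.length - 1) (Nat.zero_le _) (by
      simp only [pSum, List.take_zero, wrapLen_nil, List.take_length]
      simpa using List.sum_nonneg fun l hl => (hL l hl).le)
  convert this using 2 <;> (unfold hIdx; congr!)

theorem le_hIdx (L : List ℝ) (j : ℕ) (hj : j < L.length)
    (h : pSum L j + wrapLen (L.take j) ≤ pSum L L.length) : j ≤ hIdx L := by
  unfold hIdx
  exact Nat.le_findGreatest (by omega) h

theorem pSum_mono (L : List ℝ) (hL : ∀ l ∈ L, 0 < l) (i j : ℕ) (hij : i ≤ j) :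
    pSum L i ≤ pSum L j := by
  have : L.take j = L.take i ++ (L.take j).drop i := by
    conv_lhs => rw [← List.take_append_drop i (L.take j), List.take_take, min_eq_left hij]
  unfold pSum
  rw [this, List.sum_append]
  have : 0 ≤ ((L.take j).drop i).sum :=
    List.sum_nonneg fun l hl => (hL l (List.mem_of_mem_take (List.mem_of_mem_drop hl))).le
  linarith

theorem pSum_drop (L : List ℝ) (i : ℕ) : (L.drop i).sum = pSum L L.length - pSum L i := by
  unfold pSum
  have := congrArg List.sum (List.take_append_drop i L)
  rw [List.sum_append] at this
  rw [List.take_length]; linarith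

theorem pos_take (L : List ℝ) (hL : ∀ l ∈ L, 0 < l) (i : ℕ) : ∀ l ∈ L.take i, 0 < l :=
  fun l hl => hL l (List.mem_of_mem_take hl)

/-- last-block start of a valid partition is at most hIdx -/
theorem split_le (L B : List ℝ) (Q : List (List ℝ)) (hQ : ValidPartition L (Q ++ [B]))
    (hL : ∀ l ∈ L, 0 < l)
    (hw : ∀ j < L.length, ∀ P', ValidPartition (L.take j) P' → wrapLen (L.take j) ≤ lastTotal P') :
    Q.flatten.length ≤ hIdx L ∧ Q.flatten = L.take Q.flatten.length ∧
      B.sum = pSum L L.length - pSum L Q.flatten.length ∧ ValidPartition Q.flatten Q := by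
  obtain ⟨e, hv, hB, hl⟩ := valid_snoc_inv L B Q hQ hL
  have e1 : Q.flatten = L.take Q.flatten.length := by
    conv_rhs => rw [e]
    simp
  have e2 : B = L.drop Q.flatten.length := by
    conv_rhs => rw [e]
    simp
  have hs : B.sum = pSum L L.length - pSum L Q.flatten.length := by
    rw [← pSum_drop, ← e2]
  have hlen : Q.flatten.length < L.length := by
    have := congrArg List.length e
    rw [List.length_append] at this
    have := List.length_pos_iff.2 hB
    omega
  refine ⟨le_hIdx L _ hlen ?_, e1, hs, hv⟩
  have := hw _ hlen Q (by rw [← e1]; exact hv)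
  linarith

theorem main_opt (n : ℕ) : ∀ L : List ℝ, L.length ≤ n → (∀ l ∈ L, 0 < l) →
    ValidPartition L (piPart L) ∧
      ∀ P', ValidPartition L P' → lastTotal (piPart L) ≤ lastTotal P' := by
  induction n with
  | zero =>
    intro L hn _
    have : L = [] := by simpa using hn
    subst this
    rw [piPart_nil]
    exact ⟨valid_nil, fun P' h => by rw [valid_nil_eq P' h]⟩
  | succ n ih =>
    intro L hn hL
    by_cases h0 : L = []
    · subst h0
      rw [piPart_nil]
      exact ⟨valid_nil, fun P' h => by rw [valid_nil_eq P' h]⟩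
    have hlt := hIdx_lt L h0
    have ih' : ∀ j < L.length, ValidPartition (L.take j) (piPart (L.take j)) ∧
      ∀ P', ValidPartition (L.take j) P' → lastTotal (piPart (L.take j)) ≤ lastTotal P' :=
      fun j hj => ih _ (by rw [List.length_take]; omega) (pos_take L hL j)
    have hw : ∀ j < L.length, wrapLen (L.take j) = lastTotal (piPart (L.take j)) :=
      fun j hj => wrapLen_eq _ _ (ih' j hj).1 (ih' j hj).2
    rw [piPart_ne L h0]
    constructor
    · have := valid_snoc (L.take (hIdx L)) (L.drop (hIdx L)) _ (ih' _ hlt).1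
        (by intro h; have := congrArg List.length h; simp at this; omega)
        (by
          rw [← hw _ hlt, pSum_drop]
          have := hIdx_spec L hL
          linarith)
      rwa [List.take_append_drop] at this
    · intro P' hP'
      rcases List.eq_nil_or_concat P' with rfl | ⟨Q, B, rfl⟩
      · exact absurd (by simpa using hP'.1.symm) h0
      · rw [lastTotal_snoc]
        rw [List.concat_eq_append] at *
        obtain ⟨hle, -, hs, -⟩ := split_le L B Q hP' hL
          (fun j hj P' h => by rw [hw j hj]; exact (ih' j hj).2 P' h)
        rw [lastTotal_snoc, hs, pSum_drop]
        have := pSum_mono L hL _ _ hle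
        linarith

theorem pi_valid (L : List ℝ) (hL : ∀ l ∈ L, 0 < l) : ValidPartition L (piPart L) :=
  (main_opt _ L le_rfl hL).1

theorem pi_wrap (L : List ℝ) (hL : ∀ l ∈ L, 0 < l) : lastTotal (piPart L) = wrapLen L :=
  (wrapLen_eq _ _ (pi_valid L hL) (main_opt _ L le_rfl hL).2).symm

theorem wrap_le (L : List ℝ) (hL : ∀ l ∈ L, 0 < l) (P : List (List ℝ))
    (hP : ValidPartition L P) : wrapLen L ≤ lastTotal P := by
  rw [← pi_wrap L hL]
  exact (main_opt _ L le_rfl hL).2 P hP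

theorem hIdx_mono (L : List ℝ) (hL : ∀ l ∈ L, 0 < l) (i : ℕ) (hi : i ≤ L.length) (h0 : L.take i ≠ []) :
    hIdx (L.take i) ≤ hIdx L := by
  have hlt := hIdx_lt _ h0
  have hl : (L.take i).length = i := by simp [hi]
  have hs := hIdx_spec _ (pos_take L hL i)
  rw [hl] at hlt hs
  apply le_hIdx _ _ (by omega)
  have hp : ∀ j ≤ i, pSum (L.take i) j = pSum L j := by
    intro j hj
    simp [pSum, List.take_take, hj]
  rw [hp _ hlt.le, hp _ le_rfl, List.take_take, min_eq_left hlt.le] at hs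
  exact hs.trans (pSum_mono L hL _ _ hi)

theorem count_mono (n : ℕ) : ∀ L : List ℝ, L.length ≤ n → (∀ l ∈ L, 0 < l) →
    ∀ i, (piPart (L.take i)).length ≤ (piPart L).length := by
  induction n with
  | zero =>
    intro L hn _ i
    have : L = [] := by simpa using hn
    subst this
    simp
  | succ n ih =>
    intro L hn hL i
    rcases le_total L.length i with hi | hi
    · rw [List.take_of_length_le hi]
    by_cases h0 : L.take i = []
    · rw [h0, piPart_nil]; simp
    have hL0 : L ≠ [] := by rintro rfl; simp at h0
    have hm := hIdx_mono L hL i hi h0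
    have hlt := hIdx_lt _ h0
    have hlt' := hIdx_lt _ hL0
    have hl : (L.take i).length = i := by simp [hi]
    rw [hl] at hlt
    rw [piPart_ne _ h0, piPart_ne _ hL0]
    have := ih (L.take (hIdx L)) (by rw [List.length_take]; omega) (pos_take L hL _) (hIdx (L.take i))
    rw [List.take_take, min_eq_left hm] at this
    rw [List.take_take, min_eq_left hlt.le, List.length_append, List.length_append]
    simpa using this

theorem count_max (n : ℕ) : ∀ L : List ℝ, L.length ≤ n → (∀ l ∈ L, 0 < l) →
    ∀ P', ValidPartition L P' → P'.length ≤ (piPart L).length := by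
  induction n with
  | zero =>
    intro L hn _ P' h
    have : L = [] := by simpa using hn
    subst this
    rw [valid_nil_eq P' h]; simp
  | succ n ih =>
    intro L hn hL P' hP'
    by_cases h0 : L = []
    · subst h0
      rw [valid_nil_eq P' hP']; simp
    rcases List.eq_nil_or_concat P' with rfl | ⟨Q, B, rfl⟩
    · simp
    rw [List.concat_eq_append] at *
    obtain ⟨hle, he, -, hv⟩ := split_le L B Q hP' hL
      (fun j hj P' h => wrap_le _ (pos_take L hL j) P' h)
    have hlt := hIdx_lt L h0
    rw [he] at hv
    have h1 := ih _ (by rw [List.length_take]; omega) (pos_take L hL _) Q hv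
    have h2 := count_mono _ (L.take (hIdx L)) le_rfl (pos_take L hL _) Q.flatten.length
    rw [List.take_take, min_eq_left hle] at h2
    rw [piPart_ne L h0, List.length_append, List.length_append]
    simpa using h1.trans h2

theorem pi_take (n : ℕ) : ∀ L : List ℝ, L.length ≤ n → (∀ l ∈ L, 0 < l) →
    ∀ k, (piPart L).take k = piPart (L.take (((piPart L).take k).flatten.length)) := by
  induction n with
  | zero =>
    intro L hn _ k
    have : L = [] := by simpa using hn
    subst this
    simp [piPart_nil]
  | succ n ih =>
    intro L hn hL k
    rcases le_or_gt (piPart L).length k with hk | hk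
    · rw [List.take_of_length_le hk, (pi_valid L hL).1, List.take_length]
    by_cases h0 : L = []
    · subst h0; simp [piPart_nil]
    have hlt := hIdx_lt L h0
    have hk' : k ≤ (piPart (L.take (hIdx L))).length := by
      rw [piPart_ne L h0, List.length_append] at hk
      simp at hk; omega
    have e : (piPart L).take k = (piPart (L.take (hIdx L))).take k := by
      rw [piPart_ne L h0, List.take_append_of_le_length hk']
    have hv := (pi_valid _ (pos_take L hL (hIdx L))).1
    have hle : ((piPart (L.take (hIdx L))).take k).flatten.length ≤ hIdx L := by
      have h1 := congrArg List.length hv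
      rw [← List.take_append_drop k (piPart (L.take (hIdx L))), List.flatten_append,
        List.length_append, List.length_take] at h1
      omega
    have := ih (L.take (hIdx L)) (by rw [List.length_take]; omega) (pos_take L hL _) k
    rw [List.take_take, min_eq_left hle] at this
    rw [e]; exact this

/-- For every index `h` that is the right endpoint of a block of
`Π(L)` (i.e. `h` is the length of the concatenation of the first `k` blocks of
`Π(L)`, for some `1 ≤ k ≤ |Π(L)|`), the blocks of `Π(L)` contained in the prefix
`(l_1, …, l_h)` — namely the first `k` blocks — form a valid partition of that
prefix whose number of blocks is the maximum possible over all valid partitions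
of `(l_1, …, l_h)`, and whose last-block total equals `y_h`. -/
theorem stmt_9 (L : List ℝ) (hL : ∀ l ∈ L, 0 < l) (k : ℕ) (hk1 : 1 ≤ k)
    (hk : k ≤ (piPart L).length) :
    ValidPartition (L.take (((piPart L).take k).flatten.length)) ((piPart L).take k) ∧
    (∀ P', ValidPartition (L.take (((piPart L).take k).flatten.length)) P' →
      P'.length ≤ ((piPart L).take k).length) ∧
    lastTotal ((piPart L).take k) =
      wrapLen (L.take (((piPart L).take k).flatten.length)) := by
  have e := pi_take _ L le_rfl hL k
  have hp := pos_take L hL (((piPart L).take k).flatten.length)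
  generalize L.take (((piPart L).take k).flatten.length) = M at *
  rw [e]
  exact ⟨pi_valid M hp, count_max _ M le_rfl hp, pi_wrap M hp⟩
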